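/- Let σ₃ be the morphism on binary words defined by σ₃(0) = 0001 and σ₃(1) = 101. For every n ≥ 0, the word σ₃ⁿ(0) avoids abelian 4-powers cyclically. Consequently there exist arbitrarily long binary words avoiding abelian 4-powers cyclically, i.e. A_∞(2) ≤ 4. -/

import Mathlib

/-!
Dekking's method. Weigh the letters by elements of a commutative monoid so that every image `σ a`
has weight zero. The blocks of an abelian `N`-power in `σ(w)^ω` are delimited by `N + 1` cuts, and
the weights of the prefixes ending at these cuts form an arithmetic progression among the weights of
prefixes of images of letters. If that set contains only constant progressions of this length, all
cuts have the same weight. If moreover the weight of a cut determines what is left of the image it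
falls in, then moving all cuts to the ends of their images conjugates every block by the same word,
so the blocks become images of words; these form an abelian `N`-power in `w^ω` as soon as `σ`
reflects abelian equivalence. Their length is then at least `|w|`, so they contain a rotation of
`w`, and the original blocks have length at least `|σ(w)|`.

For `σ₃` the weights are `0 ↦ 1` and `1 ↦ 2` modulo `5`: the residue `4` never occurs, whereas a
nonconstant progression of five terms covers all residues.
-/

/-- `u` is an abelian `N`-power of period `m`: a concatenation of `N` nonempty
pairwise abelian-equivalent words of common length `m`. -/
def IsAbelianPower {α : Type*} (N m : ℕ) (u : List α) : Prop :=
  0 < m ∧ ∃ f : Fin N → List α,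
    u = (List.ofFn f).flatten ∧ (∀ i, (f i).length = m) ∧ ∀ i j, List.Perm (f i) (f j)

/-- `u` occurs in the infinite word `w^ω`, i.e. `u` is a factor of `w^k` for some `k`. -/
def OccursCyc {α : Type*} (w u : List α) : Prop :=
  ∃ k : ℕ, u <:+: (List.replicate k w).flatten

/-- `w` avoids abelian `N`-powers cyclically: every abelian `N`-power of period `m`
occurring in `w^ω` satisfies `m ≥ |w|`. -/
def AvoidsAbelianCyc {α : Type*} (N : ℕ) (w : List α) : Prop :=
  ∀ m u, IsAbelianPower N m u → OccursCyc w u → w.length ≤ m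

/-- Application of a morphism given by its images on letters. -/
def applyMorphism {α β : Type*} (σ : α → List β) (w : List α) : List β :=
  (w.map σ).flatten

/-- Dekking-style morphism σ₃ : 0 ↦ 0001, 1 ↦ 101. -/
def sigma3 : Fin 2 → List (Fin 2) := fun a => if a = 0 then [0, 0, 0, 1] else [1, 0, 1]

open List

section Morphism

variable {α β : Type*} {σ : α → List β}

lemma applyMorphism_cons (σ : α → List β) (a : α) (w : List α) :
    applyMorphism σ (a :: w) = σ a ++ applyMorphism σ w :=
  flatMap_cons

lemma applyMorphism_append (σ : α → List β) (v w : List α) :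
    applyMorphism σ (v ++ w) = applyMorphism σ v ++ applyMorphism σ w :=
  flatMap_append

lemma applyMorphism_singleton (σ : α → List β) (a : α) : applyMorphism σ [a] = σ a :=
  flatMap_singleton σ a

lemma flatten_replicate_applyMorphism (σ : α → List β) (k : ℕ) (w : List α) :
    (replicate k (applyMorphism σ w)).flatten = applyMorphism σ (replicate k w).flatten := by
  induction k with
  | zero => rfl
  | succ k ih => simp only [replicate_succ, flatten_cons, applyMorphism_append, ih]

lemma length_applyMorphism_le_of_subperm (σ : α → List β) {v w : List α} (h : v <+~ w) :
    (applyMorphism σ v).length ≤ (applyMorphism σ w).length := by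
  obtain ⟨l, hlv, hlw⟩ := h
  calc (applyMorphism σ v).length
    _ = (applyMorphism σ l).length := (hlv.flatMap_right σ).length_eq.symm
    _ ≤ (applyMorphism σ w).length := (hlw.flatMap σ).length_le

lemma mul_length_le_length_applyMorphism {k : ℕ} (hσ : ∀ a, k ≤ (σ a).length) (w : List α) :
    k * w.length ≤ (applyMorphism σ w).length := by
  induction w with
  | nil => exact le_rfl
  | cons a w ih =>
    rw [applyMorphism_cons, length_append, length_cons, mul_add_one, add_comm]
    exact add_le_add (hσ a) ih

lemma pow_mul_length_le_length_iterate {σ : α → List α} {k : ℕ} (hσ : ∀ a, k ≤ (σ a).length)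
    (n : ℕ) (w : List α) : k ^ n * w.length ≤ ((applyMorphism σ)^[n] w).length := by
  induction n with
  | zero => simp
  | succ n ih =>
    rw [Function.iterate_succ_apply', pow_succ', mul_assoc]
    exact (Nat.mul_le_mul_left k ih).trans (mul_length_le_length_applyMorphism hσ _)

lemma exists_eq_append_of_prefix_applyMorphism {W : List α} {p : List β} (hp : p ≠ [])
    (h : p <+: applyMorphism σ W) :
    ∃ V a q, V ++ [a] <+: W ∧ q ≠ [] ∧ q <+: σ a ∧ p = applyMorphism σ V ++ q := by
  induction W generalizing p with
  | nil => exact absurd (prefix_nil.mp h) hp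
  | cons a W ih =>
    have within_first (hpa : p <+: σ a) :
        ∃ V b q, V ++ [b] <+: a :: W ∧ q ≠ [] ∧ q <+: σ b ∧ p = applyMorphism σ V ++ q :=
      ⟨[], a, p, by simp, hp, hpa, rfl⟩
    rw [applyMorphism_cons] at h
    rcases prefix_or_prefix_of_prefix h (prefix_append _ _) with hpa | ⟨p', rfl⟩
    · exact within_first hpa
    · rcases eq_or_ne p' [] with rfl | hp'
      · exact within_first (append_nil _ ▸ prefix_rfl)
      · obtain ⟨V, b, q, hV, hq, hqb, rfl⟩ := ih hp' ((prefix_append_right_inj _).mp h)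
        exact ⟨a :: V, b, q, cons_prefix_cons.mpr ⟨rfl, hV⟩, hq, hqb,
          by rw [applyMorphism_cons, append_assoc]⟩

/-- Moving two cuts of `σ(W)` by the same word `r` to block boundaries only conjugates the word
between them. -/
lemma exists_perm_applyMorphism_of_prefix {W P Q : List α} {p u r : List β} (hP : P <+: W)
    (hQ : Q <+: W) (hσP : applyMorphism σ P = p ++ r) (hσQ : applyMorphism σ Q = p ++ u ++ r)
    (hu : u ≠ []) : ∃ v, Q = P ++ v ∧ applyMorphism σ v ~ u := by
  rcases prefix_or_prefix_of_prefix hP hQ with ⟨v, rfl⟩ | ⟨v, rfl⟩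
  · rw [applyMorphism_append, hσP, append_assoc, append_assoc, append_cancel_left_eq] at hσQ
    refine ⟨v, rfl, (perm_append_left_iff r).mp ?_⟩
    exact hσQ ▸ perm_append_comm
  · have hlen := congrArg length hσP
    rw [applyMorphism_append, hσQ] at hlen
    have := length_pos_iff.mpr hu
    simp only [length_append] at hlen
    omega

end Morphism

section CyclicOccurrence

variable {α : Type*} {N m : ℕ} {u w : List α}

lemma isAbelianPower_iff_exists_list :
    IsAbelianPower N m u ↔ 0 < m ∧ ∃ L : List (List α), L.length = N ∧ u = L.flatten ∧
      (∀ v ∈ L, v.length = m) ∧ ∀ v ∈ L, ∀ v' ∈ L, v ~ v' := by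
  refine and_congr_right fun _ => ⟨?_, ?_⟩
  · rintro ⟨f, hu, hlen, hperm⟩
    exact ⟨ofFn f, length_ofFn, hu, forall_mem_ofFn_iff.mpr hlen,
      forall_mem_ofFn_iff.mpr fun i => forall_mem_ofFn_iff.mpr (hperm i)⟩
  · rintro ⟨L, rfl, hu, hlen, hperm⟩
    exact ⟨L.get, by rwa [ofFn_get], fun i => hlen _ (get_mem L i),
      fun i j => hperm _ (get_mem L i) _ (get_mem L j)⟩

lemma avoidsAbelianCyc_singleton (N : ℕ) (a : α) : AvoidsAbelianCyc N [a] :=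
  fun _ _ hu _ => hu.1

lemma OccursCyc.subperm (h : OccursCyc w u) (hlen : w.length ≤ u.length) : w <+~ u := by
  obtain ⟨k, p, s, hps⟩ := h
  induction k generalizing p with
  | zero =>
    have hu : u = [] := by simp_all
    rw [hu, length_nil, Nat.le_zero, length_eq_zero_iff] at hlen
    exact hlen ▸ nil_subperm
  | succ k ih =>
    rw [replicate_succ, flatten_cons, append_assoc] at hps
    rcases append_eq_append_iff.mp hps with ⟨q, rfl, hq⟩ | ⟨p', rfl, hp'⟩
    · -- Here `w = pq`, and both `u` and the rotation `qp` of `w` are prefixes of `q w^(k+1)`.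
      have hp : p <+: (replicate k (p ++ q)).flatten ++ (p ++ q) := by
        rw [← flatten_concat, ← replicate_succ', replicate_succ, flatten_cons, append_assoc]
        exact prefix_append _ _
      have hqp : q ++ p <+: u := by
        refine prefix_of_prefix_length_le ((prefix_append_right_inj q).mpr hp) ?_ ?_
        · rw [← append_assoc, ← hq, append_assoc]
          exact prefix_append _ _
        · rwa [length_append, add_comm, ← length_append]
      exact perm_append_comm.subperm.trans hqp.sublist.subperm
    · exact ih p' (by rw [append_assoc, hp'])

end CyclicOccurrence

section Dekking

variable {α β G : Type*} [AddCommMonoid G] {N : ℕ} {σ : α → List β} {φ : β → G} {A : Set G}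
  {tail : G → List β}

/-- The value at a word of the monoid morphism into `G` extending `φ`. -/
def weight (φ : β → G) (w : List β) : G :=
  (w.map φ).sum

lemma weight_append (φ : β → G) (v w : List β) : weight φ (v ++ w) = weight φ v + weight φ w := by
  simp only [weight, map_append, sum_append]

lemma weight_eq_of_perm (φ : β → G) {v w : List β} (h : v ~ w) : weight φ v = weight φ w :=
  (h.map φ).sum_eq

lemma weight_flatten_of_forall_eq {d : G} {L : List (List β)} (h : ∀ u ∈ L, weight φ u = d) :
    weight φ L.flatten = L.length • d := by
  induction L with
  | nil => simp [weight]
  | cons u L ih =>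
    rw [forall_mem_cons] at h
    rw [flatten_cons, weight_append, h.1, ih h.2, length_cons, succ_nsmul']

/-- Dekking's sufficient condition for the morphism `σ` to preserve abelian `N`-power freeness.
The set `A` contains the weights of all prefixes of images of letters, and `tail g` is what remains
of the image of a letter after any nonempty prefix of weight `g`. Cuts between two images are
regarded as the end of the first one, so that nothing remains at weight zero. -/
structure DekkingCriterion (N : ℕ) (σ : α → List β) (φ : β → G) (A : Set G)
    (tail : G → List β) : Prop where
  weight_image : ∀ a, weight φ (σ a) = 0
  zero_mem : 0 ∈ A
  weight_mem : ∀ a p, p <+: σ a → weight φ p ∈ A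
  progression_free : ∀ x d, (∀ i ≤ N, x + i • d ∈ A) → d = 0
  tail_zero : tail 0 = []
  append_tail : ∀ a p, p <+: σ a → p ≠ [] → p ++ tail (weight φ p) = σ a
  perm_of_perm_image : ∀ v w, applyMorphism σ v ~ applyMorphism σ w → v ~ w

namespace DekkingCriterion

lemma weight_applyMorphism (h : DekkingCriterion N σ φ A tail) (W : List α) :
    weight φ (applyMorphism σ W) = 0 := by
  induction W with
  | nil => rfl
  | cons a W ih => rw [applyMorphism_cons, weight_append, h.weight_image, ih, add_zero]

lemma weight_mem_of_prefix (h : DekkingCriterion N σ φ A tail) {W : List α} {p : List β}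
    (hp : p <+: applyMorphism σ W) : weight φ p ∈ A := by
  rcases eq_or_ne p [] with rfl | hne
  · exact h.zero_mem
  · obtain ⟨V, a, q, -, -, hqa, rfl⟩ := exists_eq_append_of_prefix_applyMorphism hne hp
    rw [weight_append, h.weight_applyMorphism, zero_add]
    exact h.weight_mem a q hqa

lemma exists_prefix_applyMorphism_eq (h : DekkingCriterion N σ φ A tail) {W : List α}
    {p : List β} (hp : p <+: applyMorphism σ W) :
    ∃ P, P <+: W ∧ applyMorphism σ P = p ++ tail (weight φ p) := by
  rcases eq_or_ne p [] with rfl | hne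
  · exact ⟨[], nil_prefix, h.tail_zero.symm⟩
  · obtain ⟨V, a, q, hV, hq, hqa, rfl⟩ := exists_eq_append_of_prefix_applyMorphism hne hp
    refine ⟨V ++ [a], hV, ?_⟩
    rw [weight_append, h.weight_applyMorphism, zero_add, append_assoc, h.append_tail a q hqa hq,
      applyMorphism_append, applyMorphism_singleton]

lemma weight_block_eq_zero (h : DekkingCriterion N σ φ A tail) {W : List α} {p : List β}
    {L : List (List β)} (hL : L.length = N) {d : G} (hd : ∀ u ∈ L, weight φ u = d)
    (hp : p ++ L.flatten <+: applyMorphism σ W) : d = 0 := by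
  refine h.progression_free (weight φ p) d fun i hi => ?_
  have hcut : p ++ (L.take i).flatten <+: applyMorphism σ W :=
    ((prefix_append_right_inj p).mpr (take_prefix i L).flatten).trans hp
  have hweight : weight φ (L.take i).flatten = i • d := by
    rw [weight_flatten_of_forall_eq fun u hu => hd u (mem_of_mem_take hu), length_take, hL,
      min_eq_left hi]
  rw [← hweight, ← weight_append]
  exact h.weight_mem_of_prefix hcut

lemma exists_preimage_blocks (h : DekkingCriterion N σ φ A tail) {W : List α}
    {L : List (List β)} (hL : ∀ u ∈ L, u ≠ [] ∧ weight φ u = 0) {p : List β}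
    (hp : p ++ L.flatten <+: applyMorphism σ W) :
    ∃ (P : List α) (L' : List (List α)), P ++ L'.flatten <+: W ∧
      applyMorphism σ P = p ++ tail (weight φ p) ∧ L'.length = L.length ∧
      ∀ v ∈ L', ∃ u ∈ L, applyMorphism σ v ~ u := by
  induction L generalizing p with
  | nil =>
    obtain ⟨P, hP, hσP⟩ := h.exists_prefix_applyMorphism_eq (append_nil p ▸ hp)
    exact ⟨P, [], by simpa using hP, hσP, rfl, forall_mem_nil _⟩
  | cons u L ih =>
    obtain ⟨⟨hu, hu0⟩, hL⟩ := forall_mem_cons.mp hL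
    obtain ⟨P, hP, hσP⟩ := h.exists_prefix_applyMorphism_eq ((prefix_append p _).trans hp)
    rw [flatten_cons, ← append_assoc] at hp
    obtain ⟨Q, L', hQ, hσQ, hlen, hL'⟩ := ih hL hp
    rw [weight_append, hu0, add_zero] at hσQ
    obtain ⟨v, rfl, hv⟩ :=
      exists_perm_applyMorphism_of_prefix hP ((prefix_append Q _).trans hQ) hσP hσQ hu
    refine ⟨P, v :: L', by rwa [flatten_cons, ← append_assoc], hσP, by simp [hlen], ?_⟩
    refine forall_mem_cons.mpr ⟨⟨u, mem_cons_self, hv⟩, fun v' hv' => ?_⟩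
    obtain ⟨u', hu', hperm⟩ := hL' v' hv'
    exact ⟨u', mem_cons_of_mem u hu', hperm⟩

lemma exists_isAbelianPower_preimage (h : DekkingCriterion N σ φ A tail) (hN : N ≠ 0)
    {W : List α} {m : ℕ} {u : List β} (hu : IsAbelianPower N m u)
    (huW : u <:+: applyMorphism σ W) :
    ∃ v t, IsAbelianPower N v.length (v ++ t) ∧ v ++ t <:+: W ∧
      (applyMorphism σ v).length = m := by
  obtain ⟨hm, L, hLN, rfl, hLm, hperm⟩ := isAbelianPower_iff_exists_list.mp hu
  obtain ⟨p, s, hps⟩ := huW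
  have hp : p ++ L.flatten <+: applyMorphism σ W := ⟨s, hps⟩
  obtain ⟨u₀, hu₀⟩ := exists_mem_of_length_pos (hLN ▸ Nat.pos_of_ne_zero hN)
  have hweight : ∀ u ∈ L, weight φ u = weight φ u₀ := fun u hu =>
    weight_eq_of_perm φ (hperm u hu u₀ hu₀)
  have hweight₀ : weight φ u₀ = 0 := h.weight_block_eq_zero hLN hweight hp
  have hne : ∀ u ∈ L, u ≠ [] := fun u hu => length_pos_iff.mp (hLm u hu ▸ hm)
  obtain ⟨P, L', hPW, -, hL'L, hL'⟩ := h.exists_preimage_blocks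
    (fun u hu => ⟨hne u hu, (hweight u hu).trans hweight₀⟩) hp
  have hσperm : ∀ v ∈ L', applyMorphism σ v ~ u₀ := fun v hv =>
    let ⟨u, hu, hvu⟩ := hL' v hv
    hvu.trans (hperm u hu u₀ hu₀)
  have hperm' : ∀ v ∈ L', ∀ v' ∈ L', v ~ v' := fun v hv v' hv' =>
    h.perm_of_perm_image v v' ((hσperm v hv).trans (hσperm v' hv').symm)
  obtain ⟨v, T, rfl⟩ := exists_cons_of_length_pos (hL'L ▸ hLN ▸ Nat.pos_of_ne_zero hN)
  have hσv := hσperm v mem_cons_self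
  have hv : v ≠ [] := by
    rintro rfl
    exact hne u₀ hu₀ (nil_perm.mp hσv)
  have hpower : IsAbelianPower N v.length (v ++ T.flatten) :=
    isAbelianPower_iff_exists_list.mpr ⟨length_pos_iff.mpr hv, v :: T, hL'L.trans hLN, rfl,
      fun v' hv' => (hperm' v' hv' v mem_cons_self).length_eq, hperm'⟩
  exact ⟨v, T.flatten, hpower, (suffix_append P _).isInfix.trans hPW.isInfix,
    hσv.length_eq.trans (hLm u₀ hu₀)⟩

theorem avoidsAbelianCyc_applyMorphism (h : DekkingCriterion N σ φ A tail) (hN : N ≠ 0)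
    {w : List α} (hw : AvoidsAbelianCyc N w) : AvoidsAbelianCyc N (applyMorphism σ w) := by
  rintro m u hu ⟨k, huw⟩
  rw [flatten_replicate_applyMorphism] at huw
  obtain ⟨v, t, hpower, hvtw, rfl⟩ := h.exists_isAbelianPower_preimage hN hu huw
  have hlen : w.length ≤ v.length := hw _ _ hpower ⟨k, hvtw⟩
  have hv : OccursCyc w v := ⟨k, (prefix_append v t).isInfix.trans hvtw⟩
  exact length_applyMorphism_le_of_subperm σ (hv.subperm hlen)

theorem avoidsAbelianCyc_iterate {σ : α → List α} {φ : α → G} {tail : G → List α}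
    (h : DekkingCriterion N σ φ A tail) (hN : N ≠ 0) (a : α) (n : ℕ) :
    AvoidsAbelianCyc N ((applyMorphism σ)^[n] [a]) := by
  induction n with
  | zero => exact avoidsAbelianCyc_singleton N a
  | succ n ih =>
    rw [Function.iterate_succ_apply']
    exact h.avoidsAbelianCyc_applyMorphism hN ih

end DekkingCriterion

end Dekking

section Sigma3

lemma three_le_length_sigma3 : ∀ a, 3 ≤ (sigma3 a).length := by
  decide

lemma count_applyMorphism_sigma3 (w : List (Fin 2)) :
    (applyMorphism sigma3 w).count 0 = 3 * w.count 0 + w.count 1 ∧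
      (applyMorphism sigma3 w).count 1 = w.count 0 + 2 * w.count 1 := by
  induction w with
  | nil => exact ⟨rfl, rfl⟩
  | cons a w ih =>
    rw [applyMorphism_cons, count_append, count_append, ih.1, ih.2]
    fin_cases a <;> simp [sigma3] <;> omega

lemma perm_of_perm_applyMorphism_sigma3 {v w : List (Fin 2)}
    (h : applyMorphism sigma3 v ~ applyMorphism sigma3 w) : v ~ w := by
  obtain ⟨hv0, hv1⟩ := count_applyMorphism_sigma3 v
  obtain ⟨hw0, hw1⟩ := count_applyMorphism_sigma3 w
  have h0 := h.count_eq 0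
  have h1 := h.count_eq 1
  rw [perm_iff_count, Fin.forall_fin_two]
  omega

/-- The letter weights `0 ↦ 1`, `1 ↦ 2` modulo `5`, for which both images under `σ₃` weigh zero. -/
def sigma3Weight : Fin 2 → ZMod 5 :=
  ![1, 2]

/-- What remains of a block `0001` or `101` after a nonempty prefix of the given weight; the value
at `4` is arbitrary, as no prefix has this weight. -/
def sigma3Tail : ZMod 5 → List (Fin 2) :=
  ![[], [0, 0, 1], [0, 1], [1], []]

theorem dekkingCriterion_sigma3 :
    DekkingCriterion 4 sigma3 sigma3Weight {4}ᶜ sigma3Tail where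
  weight_image := by decide
  zero_mem := by decide
  weight_mem a p hp := by
    rw [← mem_inits] at hp
    revert a p
    decide
  progression_free := by decide
  tail_zero := rfl
  append_tail a p hp := by
    rw [← mem_inits] at hp
    revert a p
    decide
  perm_of_perm_image _ _ := perm_of_perm_applyMorphism_sigma3

end Sigma3

theorem sigma3_iterates_avoid_abelian_4_powers_cyclically :
    (∀ n : ℕ, AvoidsAbelianCyc 4 ((applyMorphism sigma3)^[n] [(0 : Fin 2)])) ∧
    (∀ n : ℕ, ∃ w : List (Fin 2), n ≤ w.length ∧ AvoidsAbelianCyc 4 w) := by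
  have avoids (n : ℕ) : AvoidsAbelianCyc 4 ((applyMorphism sigma3)^[n] [(0 : Fin 2)]) :=
    dekkingCriterion_sigma3.avoidsAbelianCyc_iterate four_ne_zero 0 n
  refine ⟨avoids, fun n => ⟨_, ?_, avoids n⟩⟩
  calc n ≤ 3 ^ n := (Nat.lt_pow_self (by norm_num)).le
    _ = 3 ^ n * [(0 : Fin 2)].length := (mul_one _).symm
    _ ≤ _ := pow_mul_length_le_length_iterate three_le_length_sigma3 n _
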